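/- Let d ≥ 2 be an integer, let p, q, r ∈ [1,∞), let C ≥ 1, and let A > 0. If ‖T[f]‖_{L^q(L^r),N} ≤ A ‖f‖_{L^p(ℝ^d)} holds for every nonnegative measurable function f on ℝ^d, then necessarily 1 + (d−1)/q ≥ d/p. -/

import Mathlib

open MeasureTheory ENNReal

noncomputable section

/-- `ℝ^n` with the Euclidean structure. We model `ℝ^d` as `Euc (d-1) × ℝ`. -/
abbrev Euc (n : ℕ) := EuclideanSpace ℝ (Fin n)

/-- The local x-ray transform: `T[f](ξ,x) = ∫_0^1 f (x + t(ξ + e_d)) dt`. -/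
def xrayT {n : ℕ} (f : Euc n × ℝ → ℝ≥0∞) (ξ x : Euc n) : ℝ≥0∞ :=
  ∫⁻ t in Set.Ioc (0:ℝ) 1, f (x + t • ξ, t)

/-- The Nikodym-order mixed norm `‖T[f]‖_{L^q(L^r),N}`. -/
def nikodymMixedNorm {n : ℕ} (q r C : ℝ) (f : Euc n × ℝ → ℝ≥0∞) : ℝ≥0∞ :=
  (∫⁻ x : Euc n, (∫⁻ ξ in Metric.ball (0 : Euc n) C, xrayT f ξ x ^ r) ^ (q / r)) ^ (1 / q)

/-- `‖f‖_{L^p}` for a nonnegative (extended-real-valued) function. -/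
def lpNorm {α : Type*} [MeasureSpace α] (p : ℝ) (f : α → ℝ≥0∞) : ℝ≥0∞ :=
  (∫⁻ z, f z ^ p) ^ (1 / p)

/-!
Test the bound on the indicator of the cylinder `|x| < (1 + C)δ`, `0 < t ≤ δ`. Every line through
a point of `B(0, δ)` whose slope lies in `B(0, C)` stays in the cylinder up to height `δ`, so the
left-hand side is at least a constant times `δ · δ^{(d-1)/q}`, while the right-hand side is a
constant times `(δ^d)^{1/p}`. Letting `δ → 0` compares the two exponents.
-/

open Filter Topology

theorem mul_measure_rpow_le_lintegral_rpow {α : Type*} [MeasurableSpace α] {μ : Measure α}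
    {s : Set α} (hs : MeasurableSet s) {p : ℝ} (hp : 0 < p) {a : ℝ≥0∞} {f : α → ℝ≥0∞}
    (h : ∀ x ∈ s, a ≤ f x) :
    a * μ s ^ (1 / p) ≤ (∫⁻ x in s, f x ^ p ∂μ) ^ (1 / p) := by
  calc a * μ s ^ (1 / p) = (∫⁻ _ in s, a ^ p ∂μ) ^ (1 / p) := by
        rw [setLIntegral_const, ENNReal.mul_rpow_of_nonneg _ _ (by positivity), ← ENNReal.rpow_mul,
          mul_one_div_cancel hp.ne', ENNReal.rpow_one]
    _ ≤ (∫⁻ x in s, f x ^ p ∂μ) ^ (1 / p) := by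
        gcongr ?_ ^ (1 / p)
        exact setLIntegral_mono' hs fun x hx => ENNReal.rpow_le_rpow (h x hx) hp.le

theorem lpNorm_indicator_one {α : Type*} [MeasureSpace α] {p : ℝ} (hp : 0 < p) {s : Set α}
    (hs : MeasurableSet s) : lpNorm p (s.indicator 1 : α → ℝ≥0∞) = volume s ^ (1 / p) := by
  have indicator_rpow : ∀ z, (s.indicator 1 z : ℝ≥0∞) ^ p = s.indicator 1 z := fun z => by
    by_cases hz : z ∈ s <;> simp [hz, hp]
  simp only [_root_.lpNorm, indicator_rpow, lintegral_indicator_one hs]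

theorem le_of_eventually_mul_rpow_le {c L : ℝ≥0∞} (hc : c ≠ 0) (hL : L ≠ ∞) {a b : ℝ}
    (h : ∀ᶠ δ : ℝ in 𝓝[>] 0, c * ENNReal.ofReal δ ^ a ≤ L * ENNReal.ofReal δ ^ b) : b ≤ a := by
  by_contra! hab
  have tendsto_zero : Tendsto (fun δ : ℝ => L * ENNReal.ofReal δ ^ (b - a)) (𝓝[>] 0) (𝓝 0) := by
    have hcont : Continuous fun δ : ℝ => L * ENNReal.ofReal δ ^ (b - a) :=
      (ENNReal.continuous_const_mul hL).comp
        (ENNReal.continuous_rpow_const.comp ENNReal.continuous_ofReal)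
    simpa [sub_pos.2 hab] using (hcont.tendsto 0).mono_left nhdsWithin_le_nhds
  refine hc (nonpos_iff_eq_zero.1 (ge_of_tendsto tendsto_zero ?_))
  filter_upwards [h, self_mem_nhdsWithin] with δ hδ hpos
  have hδ0 : 0 < ENNReal.ofReal δ := ENNReal.ofReal_pos.2 hpos
  rwa [ENNReal.rpow_sub _ _ hδ0.ne' ENNReal.ofReal_ne_top, ← mul_div_assoc,
    ENNReal.le_div_iff_mul_le (.inl (ENNReal.rpow_pos hδ0 ENNReal.ofReal_ne_top).ne')
      (.inl (ENNReal.rpow_ne_top_of_ne_zero hδ0.ne' ENNReal.ofReal_ne_top))]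

section XrayTransform

variable {n : ℕ}

theorem ofReal_le_xrayT_indicator_one {s : Set (Euc n × ℝ)} {δ : ℝ} (hδ : δ ≤ 1) {ξ x : Euc n}
    (h : ∀ t ∈ Set.Ioc 0 δ, (x + t • ξ, t) ∈ s) :
    ENNReal.ofReal δ ≤ xrayT (s.indicator 1) ξ x := by
  calc ENNReal.ofReal δ = ∫⁻ _ in Set.Ioc (0 : ℝ) δ, 1 := by simp
    _ ≤ ∫⁻ t in Set.Ioc (0 : ℝ) δ, s.indicator 1 (x + t • ξ, t) :=
        setLIntegral_mono' measurableSet_Ioc fun t ht => by simp [h t ht]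
    _ ≤ xrayT (s.indicator 1) ξ x := lintegral_mono_set (Set.Ioc_subset_Ioc_right hδ)

theorem mul_volume_rpow_le_nikodymMixedNorm {q r C : ℝ} (hq : 0 < q) (hr : 0 < r)
    {f : Euc n × ℝ → ℝ≥0∞} {s : Set (Euc n)} (hs : MeasurableSet s) {a : ℝ≥0∞}
    (h : ∀ x ∈ s, ∀ ξ ∈ Metric.ball (0 : Euc n) C, a ≤ xrayT f ξ x) :
    a * volume (Metric.ball (0 : Euc n) C) ^ (1 / r) * volume s ^ (1 / q) ≤
      nikodymMixedNorm q r C f := by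
  have inner_le : ∀ x ∈ s, a * volume (Metric.ball (0 : Euc n) C) ^ (1 / r) ≤
      (∫⁻ ξ in Metric.ball (0 : Euc n) C, xrayT f ξ x ^ r) ^ (1 / r) := fun x hx =>
    mul_measure_rpow_le_lintegral_rpow measurableSet_ball hr (h x hx)
  calc _ ≤ (∫⁻ x in s, ((∫⁻ ξ in Metric.ball (0 : Euc n) C, xrayT f ξ x ^ r) ^ (1 / r)) ^ q)
          ^ (1 / q) := mul_measure_rpow_le_lintegral_rpow hs hq inner_le
    _ = (∫⁻ x in s, (∫⁻ ξ in Metric.ball (0 : Euc n) C, xrayT f ξ x ^ r) ^ (q / r))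
          ^ (1 / q) := by simp only [← ENNReal.rpow_mul, one_div_mul_eq_div]
    _ ≤ nikodymMixedNorm q r C f := by
        unfold nikodymMixedNorm
        gcongr
        exact Measure.restrict_le_self

/-- The cylinder `B(0, (1 + C)δ) × (0, δ]`, on whose indicator the x-ray bound is tested. The
radius is what a line of slope less than `C` starting in `B(0, δ)` can reach by height `δ`. -/
def testCylinder (n : ℕ) (C δ : ℝ) : Set (Euc n × ℝ) :=
  Metric.ball 0 (δ * (1 + C)) ×ˢ Set.Ioc 0 δ

theorem measurableSet_testCylinder (C δ : ℝ) : MeasurableSet (testCylinder n C δ) :=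
  measurableSet_ball.prod measurableSet_Ioc

theorem mk_add_smul_mem_testCylinder {C δ t : ℝ} {x ξ : Euc n} (hx : x ∈ Metric.ball 0 δ)
    (hξ : ξ ∈ Metric.ball 0 C) (ht : t ∈ Set.Ioc 0 δ) :
    (x + t • ξ, t) ∈ testCylinder n C δ := by
  refine ⟨?_, ht⟩
  rw [mem_ball_zero_iff] at hx hξ ⊢
  calc ‖x + t • ξ‖ ≤ ‖x‖ + ‖t • ξ‖ := norm_add_le _ _
    _ = ‖x‖ + t * ‖ξ‖ := by rw [norm_smul, Real.norm_of_nonneg ht.1.le]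
    _ < δ + δ * C := add_lt_add_of_lt_of_le hx
        (mul_le_mul ht.2 hξ.le (norm_nonneg ξ) (ht.1.le.trans ht.2))
    _ = δ * (1 + C) := by ring

theorem volume_ball_mul {δ : ℝ} (hδ : 0 < δ) (s : ℝ) :
    volume (Metric.ball (0 : Euc n) (δ * s)) =
      ENNReal.ofReal δ ^ n * volume (Metric.ball (0 : Euc n) s) := by
  rw [Measure.addHaar_ball_mul_of_pos _ _ hδ, finrank_euclideanSpace_fin,
    ENNReal.ofReal_pow hδ.le]

theorem volume_testCylinder (C : ℝ) {δ : ℝ} (hδ : 0 < δ) :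
    volume (testCylinder n C δ) =
      volume (Metric.ball (0 : Euc n) (1 + C)) * ENNReal.ofReal δ ^ ((n : ℝ) + 1) := by
  rw [testCylinder, Measure.volume_eq_prod, Measure.prod_prod, volume_ball_mul hδ,
    Real.volume_Ioc, sub_zero]
  norm_cast
  ring

theorem lpNorm_indicator_testCylinder {p : ℝ} (hp : 0 < p) (C : ℝ) {δ : ℝ} (hδ : 0 < δ) :
    lpNorm p ((testCylinder n C δ).indicator 1 : Euc n × ℝ → ℝ≥0∞) =
      volume (Metric.ball (0 : Euc n) (1 + C)) ^ (1 / p) *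
        ENNReal.ofReal δ ^ (((n : ℝ) + 1) / p) := by
  rw [lpNorm_indicator_one hp (measurableSet_testCylinder C δ), volume_testCylinder C hδ,
    ENNReal.mul_rpow_of_nonneg _ _ (by positivity), ← ENNReal.rpow_mul, mul_one_div]

theorem mul_rpow_le_nikodymMixedNorm_indicator_testCylinder {q r : ℝ} (hq : 0 < q) (hr : 0 < r)
    (C : ℝ) {δ : ℝ} (hδ : δ ∈ Set.Ioc 0 1) :
    volume (Metric.ball (0 : Euc n) C) ^ (1 / r) * volume (Metric.ball (0 : Euc n) 1) ^ (1 / q) *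
        ENNReal.ofReal δ ^ (1 + (n : ℝ) / q) ≤
      nikodymMixedNorm q r C ((testCylinder n C δ).indicator 1) := by
  have volume_ball_rpow : volume (Metric.ball (0 : Euc n) δ) ^ (1 / q) =
      ENNReal.ofReal δ ^ ((n : ℝ) / q) * volume (Metric.ball (0 : Euc n) 1) ^ (1 / q) := by
    rw [← mul_one δ, volume_ball_mul hδ.1, mul_one, ENNReal.mul_rpow_of_nonneg _ _ (by positivity),
      ← ENNReal.rpow_natCast_mul, mul_one_div]
  calc _ = ENNReal.ofReal δ * volume (Metric.ball (0 : Euc n) C) ^ (1 / r) *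
          volume (Metric.ball (0 : Euc n) δ) ^ (1 / q) := by
        rw [volume_ball_rpow, ENNReal.rpow_add _ _ (ENNReal.ofReal_pos.2 hδ.1).ne'
          ENNReal.ofReal_ne_top, ENNReal.rpow_one]
        ring
    _ ≤ nikodymMixedNorm q r C ((testCylinder n C δ).indicator 1) :=
        mul_volume_rpow_le_nikodymMixedNorm hq hr measurableSet_ball fun _ hx _ hξ =>
          ofReal_le_xrayT_indicator_one hδ.2 fun _ ht => mk_add_smul_mem_testCylinder hx hξ ht

theorem statement7_general {p q r C : ℝ} (hp : 0 < p) (hq : 0 < q) (hr : 0 < r) (hC : 0 < C)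
    {A : ℝ≥0∞} (hA : A ≠ ∞)
    (hbound : ∀ s : Set (Euc n × ℝ), MeasurableSet s →
      nikodymMixedNorm q r C (s.indicator 1) ≤ A * lpNorm p (s.indicator 1)) :
    ((n : ℝ) + 1) / p ≤ 1 + (n : ℝ) / q := by
  have volume_ball_rpow_ne_zero : ∀ ρ : ℝ, 0 < ρ → ∀ u : ℝ,
      volume (Metric.ball (0 : Euc n) ρ) ^ u ≠ 0 := fun ρ hρ u =>
    (ENNReal.rpow_pos (Metric.measure_ball_pos volume 0 hρ) measure_ball_lt_top.ne).ne'
  refine le_of_eventually_mul_rpow_le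
    (mul_ne_zero (volume_ball_rpow_ne_zero C hC (1 / r))
      (volume_ball_rpow_ne_zero 1 one_pos (1 / q)))
    (L := A * volume (Metric.ball (0 : Euc n) (1 + C)) ^ (1 / p))
    (ENNReal.mul_ne_top hA (ENNReal.rpow_ne_top_of_nonneg (by positivity) measure_ball_lt_top.ne))
    ?_
  filter_upwards [Ioc_mem_nhdsGT one_pos] with δ hδ
  rw [mul_assoc A, ← lpNorm_indicator_testCylinder hp C hδ.1]
  exact (mul_rpow_le_nikodymMixedNorm_indicator_testCylinder hq hr C hδ).trans
    (hbound _ (measurableSet_testCylinder C δ))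

end XrayTransform

/-- Necessary condition for the Nikodym-order mixed norm bound:
`1 + (d-1)/q ≥ d/p`. -/
theorem statement7 (d : ℕ) (hd : 2 ≤ d) (p q r : ℝ)
    (hp : 1 ≤ p) (hq : 1 ≤ q) (hr : 1 ≤ r) (C : ℝ) (hC : 1 ≤ C) (A : ℝ) (hA : 0 < A)
    (hbound : ∀ f : Euc (d - 1) × ℝ → ℝ≥0∞, Measurable f →
      nikodymMixedNorm q r C f ≤ ENNReal.ofReal A * lpNorm p f) :
    1 + ((d:ℝ) - 1) / q ≥ (d:ℝ) / p := by
  simpa [Nat.cast_pred (two_pos.trans_le hd)] using statement7_general (n := d - 1)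
    (by linarith) (by linarith) (by linarith) (by linarith) ofReal_ne_top
    fun s hs => hbound (s.indicator 1) (measurable_one.indicator hs)

end
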